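/- The covering index is lower semicontinuous with respect to the Banach–Mazur distance: for every convex body K ⊆ ℝ^d (d ≥ 2) and every ε > 0 there exists η > 1 such that every convex body K' ⊆ ℝ^d with d_BM(K, K') < η satisfies coin(K') > coin(K) − ε. -/

import Mathlib

open Set Pointwise

section Defs

variable {V : Type*} [NormedAddCommGroup V] [NormedSpace ℝ V]

/-- A convex body: compact, convex, with nonempty interior. -/
def IsConvexBody (K : Set V) : Prop :=
  IsCompact K ∧ Convex ℝ K ∧ (interior K).Nonempty

/-- `K` can be covered by `m` homothets of ratio `lam`. -/
def CoversWith (K : Set V) (lam : ℝ) (m : ℕ) : Prop :=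
  ∃ t : Fin m → V, K ⊆ ⋃ i, (fun x => lam • x + t i) '' K

/-- The `m`-covering number `γ_m(K)`. -/
noncomputable def gammaC (m : ℕ) (K : Set V) : ℝ :=
  sInf {lam : ℝ | 0 < lam ∧ CoversWith K lam m}

/-- The covering index `coin(K)`. -/
noncomputable def coin (K : Set V) : ℝ :=
  sInf {r : ℝ | ∃ m : ℕ, 0 < m ∧ gammaC m K ≤ 1 / 2 ∧ r = (m : ℝ) / (1 - gammaC m K)}

/-- The weak covering index `wcoin(K)`. -/
noncomputable def wcoin (K : Set V) : ℝ :=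
  sInf {r : ℝ | ∃ m : ℕ, 0 < m ∧ gammaC m K < 1 ∧ r = (m : ℝ) / (1 - gammaC m K)}

/-- `N_λ(K)`: the least number of translates of `λ • K` needed to cover `K`. -/
noncomputable def covN (lam : ℝ) (K : Set V) : ℕ :=
  sInf {n : ℕ | CoversWith K lam n}

/-- A convex body is tightly covered if for every `0 < λ < 1` it contains `N_λ(K)`
points no two of which lie in a common homothet `λ • K + t`. -/
def TightlyCovered (K : Set V) : Prop :=
  ∀ lam : ℝ, 0 < lam → lam < 1 →
    ∃ p : Fin (covN lam K) → V, (∀ i, p i ∈ K) ∧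
      ∀ i j, i ≠ j → ∀ t : V,
        ¬(p i ∈ (fun x => lam • x + t) '' K ∧ p j ∈ (fun x => lam • x + t) '' K)

/-- The covering parameter `C(K)` of Swanepoel. -/
noncomputable def covParam (K : Set V) : ℝ :=
  sInf {r : ℝ | ∃ k : ℕ, ∃ lam : Fin k → ℝ, ∃ t : Fin k → V,
    (∀ i, 0 < lam i ∧ lam i < 1) ∧
    (K ⊆ ⋃ i, (fun x => lam i • x + t i) '' K) ∧
    r = ∑ i, 1 / (1 - lam i)}

/-- The (multiplicative) Banach–Mazur distance. -/
noncomputable def distBM {d : ℕ} (K L : Set (Fin d → ℝ)) : ℝ :=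
  sInf {δ : ℝ | 1 ≤ δ ∧ ∃ T : (Fin d → ℝ) ≃ₗ[ℝ] (Fin d → ℝ), ∃ a ∈ K, ∃ b ∈ L,
    (fun x => x - b) '' L ⊆ T '' ((fun x => x - a) '' K) ∧
    T '' ((fun x => x - a) '' K) ⊆ δ • ((fun x => x - b) '' L)}

end Defs

open Filter Topology in
theorem aux_gamma_nonneg {d : ℕ} (m : ℕ) (K : Set (Fin d → ℝ)) : 0 ≤ gammaC m K :=
  Real.sInf_nonneg fun _ h => h.1.le

theorem aux_gamma_le {d : ℕ} {m : ℕ} {K : Set (Fin d → ℝ)} {l : ℝ} (h0 : 0 < l)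
    (h : CoversWith K l m) : gammaC m K ≤ l :=
  csInf_le ⟨0, fun _ h => h.1.le⟩ ⟨h0, h⟩

theorem aux_ball {d : ℕ} {K : Set (Fin d → ℝ)} (hK : IsConvexBody K) :
    ∃ c ∈ K, ∃ r > 0, ∃ R > 0, (∀ v : Fin d → ℝ, ‖v‖ < r → c + v ∈ K) ∧ ∀ x ∈ K, ‖x - c‖ < R := by
  obtain ⟨hc, -, c, hi⟩ := hK
  obtain ⟨r, hr, hb⟩ := Metric.isOpen_iff.1 isOpen_interior c hi
  obtain ⟨R, hR, hB⟩ := hc.isBounded.subset_ball_lt 0 c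
  refine ⟨c, interior_subset hi, r, hr, R, hR, fun v hv => interior_subset (hb ?_), fun x hx => ?_⟩
  · simpa [Metric.mem_ball, dist_eq_norm] using hv
  · simpa [Metric.mem_ball, dist_eq_norm] using hB hx

theorem aux_exists_cover {d : ℕ} {K : Set (Fin d → ℝ)} (hK : IsConvexBody K) :
    ∃ m : ℕ, 0 < m ∧ gammaC m K ≤ 1 / 2 := by
  obtain ⟨c, hc, r, hr, R, hR, h1, h2⟩ := aux_ball hK
  obtain ⟨t, -, htf, ht⟩ := hK.1.finite_cover_balls (e := r / 2) (by positivity)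
  obtain ⟨s, rfl⟩ := htf.exists_finset_coe
  have key : CoversWith K (1/2) s.card := by
    refine ⟨fun i => (s.equivFin.symm i : Fin d → ℝ) - (1/2 : ℝ) • c, fun x hx => ?_⟩
    have := ht hx
    simp only [mem_iUnion] at this ⊢
    obtain ⟨y, hy, hxy⟩ := this
    refine ⟨s.equivFin ⟨y, hy⟩, c + (2:ℝ) • (x - y), h1 _ ?_, ?_⟩
    · rw [Metric.mem_ball, dist_eq_norm] at hxy
      rw [norm_smul]; norm_num; linarith
    · simp only [Equiv.symm_apply_apply]
      module
  refine ⟨s.card, ?_, aux_gamma_le (by norm_num) key⟩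
  rw [Finset.card_pos]
  by_contra h
  rw [Finset.not_nonempty_iff_eq_empty] at h
  subst h
  simpa using ht hc

theorem aux_dist_nonempty {d : ℕ} {K L : Set (Fin d → ℝ)} (hK : IsConvexBody K)
    (hL : IsConvexBody L) :
    {δ : ℝ | 1 ≤ δ ∧ ∃ T : (Fin d → ℝ) ≃ₗ[ℝ] (Fin d → ℝ), ∃ a ∈ K, ∃ b ∈ L,
    (fun x => x - b) '' L ⊆ T '' ((fun x => x - a) '' K) ∧
    T '' ((fun x => x - a) '' K) ⊆ δ • ((fun x => x - b) '' L)}.Nonempty := by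
  obtain ⟨a, ha, r, hr, R, hR, h1, h2⟩ := aux_ball hK
  obtain ⟨b, hb, r', hr', R', hR', h1', h2'⟩ := aux_ball hL
  have hs : 0 < R' / r := by positivity
  have hδ : 0 < max 1 (R' / r * R / r') := lt_max_of_lt_left one_pos
  refine ⟨max 1 (R' / r * R / r'), le_max_left _ _,
    LinearEquiv.smulOfNeZero ℝ _ (R' / r) hs.ne', a, ha, b, hb, ?_, ?_⟩
  · rintro _ ⟨x, hx, rfl⟩
    refine ⟨(R' / r)⁻¹ • (x - b), ⟨a + (R' / r)⁻¹ • (x - b), h1 _ ?_, by simp⟩, ?_⟩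
    · rw [norm_smul, norm_inv, Real.norm_of_nonneg hs.le, inv_mul_lt_iff₀ hs,
        div_mul_cancel₀ _ hr.ne']
      exact h2' x hx
    · change (R' / r) • ((R' / r)⁻¹ • (x - b)) = x - b
      rw [smul_inv_smul₀ hs.ne']
  · rintro _ ⟨_, ⟨x, hx, rfl⟩, rfl⟩
    change (R' / r) • (x - a) ∈ _
    rw [Set.mem_smul_set_iff_inv_smul_mem₀ hδ.ne']
    refine ⟨b + (max 1 (R' / r * R / r'))⁻¹ • (R' / r) • (x - a), h1' _ ?_, by simp⟩
    rw [norm_smul, norm_smul, norm_inv, Real.norm_of_nonneg hs.le, Real.norm_of_nonneg hδ.le,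
      inv_mul_lt_iff₀ hδ]
    have := le_max_right 1 (R' / r * R / r')
    rw [div_le_iff₀ hr'] at this
    exact lt_of_lt_of_le (mul_lt_mul_of_pos_left (h2 x hx) hs) this

theorem aux_cover {d : ℕ} {K L : Set (Fin d → ℝ)} {δ l : ℝ} {m : ℕ} (hδ : 1 ≤ δ)
    (T : (Fin d → ℝ) ≃ₗ[ℝ] (Fin d → ℝ)) (a b : Fin d → ℝ)
    (h1 : (fun x => x - b) '' L ⊆ T '' ((fun x => x - a) '' K))
    (h2 : T '' ((fun x => x - a) '' K) ⊆ δ • ((fun x => x - b) '' L))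
    (h : CoversWith L l m) : CoversWith K (δ * l) m := by
  obtain ⟨t, ht⟩ := h
  refine ⟨fun i => a + T.symm (δ • (t i - b + l • b)) - (δ * l) • a, fun x hx => ?_⟩
  obtain ⟨_, ⟨y, hy, rfl⟩, hxy⟩ := h2 ⟨_, ⟨x, hx, rfl⟩, rfl⟩
  have hy' := ht hy
  simp only [mem_iUnion] at hy' ⊢
  obtain ⟨i, z, hz, hzy⟩ := hy'
  obtain ⟨_, ⟨w, hw, rfl⟩, hwz⟩ := h1 ⟨z, hz, rfl⟩
  refine ⟨i, w, hw, ?_⟩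
  apply T.injective
  simp only [map_sub, map_add, map_smul, LinearEquiv.apply_symm_apply] at hxy hwz hzy ⊢
  have e1 : T x = T a + δ • (y - b) := by rw [hxy]; abel
  have e2 : T w = T a + (z - b) := by rw [← hwz]; abel
  rw [e1, e2, ← hzy]
  module

theorem aux_gamma_comp {d : ℕ} {K L : Set (Fin d → ℝ)} {δ : ℝ} {m : ℕ} (hm : 0 < m) (hδ : 1 ≤ δ)
    (T : (Fin d → ℝ) ≃ₗ[ℝ] (Fin d → ℝ)) (a b : Fin d → ℝ)
    (h1 : (fun x => x - b) '' L ⊆ T '' ((fun x => x - a) '' K))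
    (h2 : T '' ((fun x => x - a) '' K) ⊆ δ • ((fun x => x - b) '' L)) :
    gammaC m K / δ ≤ gammaC m L := by
  have h0 : 0 < δ := by linarith
  refine le_csInf ⟨1, one_pos, fun _ => 0, fun x hx => ?_⟩ ?_
  · simp only [mem_iUnion]
    exact ⟨⟨0, hm⟩, x, hx, by simp⟩
  · rintro l ⟨hl, hc⟩
    rw [div_le_iff₀' h0]
    exact aux_gamma_le (by positivity) (aux_cover hδ T a b h1 h2 hc)

open Filter Topology in
theorem aux_eventually {d : ℕ} (K : Set (Fin d → ℝ)) {ε : ℝ} (hε : 0 < ε) (m : ℕ) (hm : 0 < m) :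
    ∀ᶠ δ in 𝓝 (1 : ℝ), 1 / 2 < gammaC m K / δ ∨
      coin K - ε / 2 < (m : ℝ) / (1 - gammaC m K / δ) := by
  have hc : ContinuousAt (fun δ : ℝ => gammaC m K / δ) 1 :=
    continuousAt_const.div continuousAt_id one_ne_zero
  by_cases h : gammaC m K ≤ 1 / 2
  · have hc' : ContinuousAt (fun δ : ℝ => (m : ℝ) / (1 - gammaC m K / δ)) 1 := by
      refine continuousAt_const.div (continuousAt_const.sub hc) ?_
      rw [div_one]; linarith
    refine (hc'.eventually (lt_mem_nhds (a := coin K - ε / 2) ?_)).mono fun _ => Or.inr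
    simp only [div_one]
    have : coin K ≤ (m : ℝ) / (1 - gammaC m K) := by
      refine csInf_le ⟨0, ?_⟩ ⟨m, hm, h, rfl⟩
      rintro _ ⟨n, -, hn, rfl⟩
      exact div_nonneg (Nat.cast_nonneg _) (by linarith)
    linarith
  · refine (hc.eventually (lt_mem_nhds (a := 1 / 2) ?_)).mono fun _ => Or.inl
    simp only [div_one]; linarith

/-- the covering index is lower semicontinuous with respect to
the Banach–Mazur distance. -/
theorem coin_lowerSemicontinuous (d : ℕ) (hd : 2 ≤ d) (K : Set (Fin d → ℝ))
    (hK : IsConvexBody K) (ε : ℝ) (hε : 0 < ε) :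
    ∃ η : ℝ, 1 < η ∧ ∀ K' : Set (Fin d → ℝ), IsConvexBody K' →
      distBM K K' < η → coin K - ε < coin K' := by
  have hev : ∀ᶠ δ in nhds (1 : ℝ), ∀ m ∈ Finset.range (⌈coin K⌉₊), 0 < m →
      (1 / 2 < gammaC m K / δ ∨ coin K - ε / 2 < (m : ℝ) / (1 - gammaC m K / δ)) := by
    rw [Filter.eventually_all_finset]
    intro m _
    by_cases hm : 0 < m
    · exact (aux_eventually K hε m hm).mono fun _ h _ => h
    · exact Filter.Eventually.of_forall fun _ h => absurd h hm
  obtain ⟨r, hr, hb⟩ := Metric.eventually_nhds_iff.1 hev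
  refine ⟨1 + r, by linarith, fun K' hK' hd' => ?_⟩
  obtain ⟨δ, ⟨hδ, T, a, ha, b, hb', h1, h2⟩, hlt⟩ :=
    exists_lt_of_csInf_lt (aux_dist_nonempty hK hK') hd'
  have hδr := @hb δ (by rw [Real.dist_eq, abs_of_nonneg (by linarith)]; linarith)
  refine lt_of_lt_of_le (show coin K - ε < coin K - ε / 2 by linarith) ?_
  obtain ⟨m₀, hm₀, hg₀⟩ := aux_exists_cover hK'
  refine le_csInf ⟨_, m₀, hm₀, hg₀, rfl⟩ ?_
  rintro _ ⟨m, hm, hg, rfl⟩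
  have hg0 := aux_gamma_nonneg m K'
  have hcomp := aux_gamma_comp hm hδ T a b h1 h2
  by_cases hmem : m < ⌈coin K⌉₊
  · rcases hδr m (Finset.mem_range.2 hmem) hm with h | h
    · linarith
    · refine h.le.trans ?_
      exact div_le_div_of_nonneg_left (Nat.cast_nonneg _) (by linarith) (by linarith)
  · have : coin K ≤ m := Nat.ceil_le.1 (not_lt.1 hmem)
    have h3 : (m : ℝ) ≤ m / (1 - gammaC m K') :=
      le_div_self (Nat.cast_nonneg _) (by linarith) (by linarith)
    linarith
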